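/- Let Ω ⊆ ℝ³ be open and connected, let φ : Ω → ℝ³ be a smooth diffeomorphism onto the open set U = φ(Ω) with invertible derivative Dφ(X) at every X, and let G : Ω → ℝ^{3×3} be a smooth field of symmetric positive-definite matrices (the material metric induced by a distribution of eigenstrains). Define on U the fields b(φ(X)) = Dφ(X) G(X)⁻¹ Dφ(X)ᵀ, c = b⁻¹, and the invariants I₁ = tr b, I₂ = ((tr b)² − tr(b²))/2, I₃ = det b. Suppose that for every choice of smooth response functions α, β, γ : ℝ³ → ℝ the Cauchy stress field σ(x) = α·Id + β·b + γ·c, with α, β, γ evaluated at (I₁(x), I₂(x), I₃(x)), satisfies div σ = 0 on U. Then I₁, I₂, I₃ are constant on U and div b = 0 and div c = 0 on U. -/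

import Mathlib

open Matrix

/-- The Jacobian matrix (derivative) of a map `ℝ³ → ℝ³` at a point. -/
noncomputable def jac (φ : (Fin 3 → ℝ) → (Fin 3 → ℝ)) (x : Fin 3 → ℝ) :
    Matrix (Fin 3) (Fin 3) ℝ :=
  fun i j => fderiv ℝ φ x (Pi.single j 1) i

/-- Divergence of a matrix field: `(div T)_i = Σ_j ∂T_{ij}/∂x_j`. -/
noncomputable def mdiv (T : (Fin 3 → ℝ) → Matrix (Fin 3) (Fin 3) ℝ) (x : Fin 3 → ℝ) :
    Fin 3 → ℝ :=
  fun i => ∑ j, fderiv ℝ (fun y => T y i j) x (Pi.single j 1)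

/-- The three principal invariants `(I₁, I₂, I₃)` of a `3×3` matrix. -/
noncomputable def principalInvariants (b : Matrix (Fin 3) (Fin 3) ℝ) : Fin 3 → ℝ :=
  ![b.trace, (b.trace ^ 2 - (b * b).trace) / 2, b.det]

/-!
Constant response functions already give `div b = div c = 0`. Taking `α` to be a coordinate function
and `β = γ = 0` makes the stress the hydrostatic field `Iₖ • 1`, whose divergence is the gradient of
the invariant `Iₖ`; since `U` is connected, `Iₖ` is constant. The vanishing of a gradient is
informative only for a differentiable function, so one needs `b` to be differentiable on `U`; this
follows from the inverse function theorem, because `b ∘ φ` is differentiable on `Ω`.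
-/

section MatrixField

variable {𝕜 E : Type*} [NontriviallyNormedField 𝕜] [NormedAddCommGroup E] [NormedSpace 𝕜 E]
  {l m n : Type*} {x : E}

theorem differentiableAt_matrix_mul_apply {A : Type*} [NormedRing A] [NormedAlgebra 𝕜 A]
    [Fintype m] {M : E → Matrix l m A} {N : E → Matrix m n A} {i : l} {k : n}
    (hM : ∀ j, DifferentiableAt 𝕜 (fun y => M y i j) x)
    (hN : ∀ j, DifferentiableAt 𝕜 (fun y => N y j k) x) :
    DifferentiableAt 𝕜 (fun y => (M y * N y) i k) x := by
  simp only [Matrix.mul_apply]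
  exact .fun_sum fun j _ => (hM j).fun_mul (hN j)

theorem differentiableAt_matrix_trace {F : Type*} [NormedAddCommGroup F] [NormedSpace 𝕜 F]
    [Fintype n] {M : E → Matrix n n F} (hM : ∀ i, DifferentiableAt 𝕜 (fun y => M y i i) x) :
    DifferentiableAt 𝕜 (fun y => (M y).trace) x :=
  .fun_sum fun i _ => hM i

variable [Fintype n] [DecidableEq n]

theorem differentiableAt_matrix_det {A : Type*} [NormedCommRing A] [NormedAlgebra 𝕜 A]
    {M : E → Matrix n n A} (hM : ∀ i j, DifferentiableAt 𝕜 (fun y => M y i j) x) :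
    DifferentiableAt 𝕜 (fun y => (M y).det) x := by
  simp only [Matrix.det_apply]
  refine .fun_sum fun σ _ => .fun_const_smul ?_ (Equiv.Perm.sign σ)
  exact (HasFDerivAt.finsetProd fun i _ => (hM (σ i) i).hasFDerivAt).differentiableAt

theorem differentiableAt_matrix_adjugate_apply {A : Type*} [NormedCommRing A] [NormedAlgebra 𝕜 A]
    {M : E → Matrix n n A} (hM : ∀ i j, DifferentiableAt 𝕜 (fun y => M y i j) x) (i j : n) :
    DifferentiableAt 𝕜 (fun y => (M y).adjugate i j) x := by
  simp only [Matrix.adjugate_apply]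
  refine differentiableAt_matrix_det fun k l => ?_
  simp only [Matrix.updateRow_apply]
  split_ifs
  exacts [differentiableAt_const _, hM k l]

theorem differentiableAt_matrix_inv_apply {K : Type*} [NormedField K] [NormedAlgebra 𝕜 K]
    {M : E → Matrix n n K} (hM : ∀ i j, DifferentiableAt 𝕜 (fun y => M y i j) x)
    (hdet : (M x).det ≠ 0) (i j : n) : DifferentiableAt 𝕜 (fun y => (M y)⁻¹ i j) x := by
  simp only [Matrix.inv_def, Ring.inverse_eq_inv', Matrix.smul_apply, smul_eq_mul]
  exact ((differentiableAt_matrix_det hM).fun_inv hdet).fun_mul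
    (differentiableAt_matrix_adjugate_apply hM i j)

end MatrixField

theorem differentiableAt_principalInvariants {E : Type*} [NormedAddCommGroup E] [NormedSpace ℝ E]
    {M : E → Matrix (Fin 3) (Fin 3) ℝ} {x : E}
    (hM : ∀ i j, DifferentiableAt ℝ (fun y => M y i j) x) :
    DifferentiableAt ℝ (fun y => principalInvariants (M y)) x := by
  have htrace : DifferentiableAt ℝ (fun y => (M y).trace) x :=
    differentiableAt_matrix_trace fun i => hM i i
  have htrace_sq : DifferentiableAt ℝ (fun y => (M y * M y).trace) x :=
    differentiableAt_matrix_trace fun i =>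
      differentiableAt_matrix_mul_apply (hM i) fun j => hM j i
  refine differentiableAt_pi.2 fun k => ?_
  fin_cases k
  · exact htrace
  · change DifferentiableAt ℝ (fun y => ((M y).trace ^ 2 - (M y * M y).trace) / 2) x
    fun_prop
  · exact differentiableAt_matrix_det hM

theorem differentiableAt_of_comp_of_hasStrictFDerivAt_equiv {𝕜 E F H : Type*}
    [NontriviallyNormedField 𝕜] [NormedAddCommGroup E] [NormedSpace 𝕜 E] [CompleteSpace E]
    [NormedAddCommGroup F] [NormedSpace 𝕜 F] [NormedAddCommGroup H] [NormedSpace 𝕜 H]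
    {f : E → F} {f' : E ≃L[𝕜] F} {g : F → H} {a : E}
    (hf : HasStrictFDerivAt f (f' : E →L[𝕜] F) a) (hgf : DifferentiableAt 𝕜 (g ∘ f) a) :
    DifferentiableAt 𝕜 g (f a) := by
  have hinv : DifferentiableAt 𝕜 (hf.localInverse f f' a) (f a) :=
    hf.to_localInverse.hasFDerivAt.differentiableAt
  rw [← hf.localInverse_apply_image] at hgf
  refine (hgf.comp (f a) hinv).congr_of_eventuallyEq ?_
  filter_upwards [hf.eventually_right_inverse] with y hy
  simp only [Function.comp_apply, hy]

section Kinematics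

variable {φ : (Fin 3 → ℝ) → (Fin 3 → ℝ)} {X : Fin 3 → ℝ}

theorem det_jac : (jac φ X).det = (fderiv ℝ φ X).det := by
  have : jac φ X = LinearMap.toMatrix' (fderiv ℝ φ X).toLinearMap := by
    ext i j
    simp [jac, LinearMap.toMatrix'_apply]
  rw [this, LinearMap.det_toMatrix', ContinuousLinearMap.det]

theorem differentiableAt_jac_apply (hφ : ContDiffAt ℝ 2 φ X) (i j : Fin 3) :
    DifferentiableAt ℝ (fun Y => jac φ Y i j) X := by
  have hfderiv : DifferentiableAt ℝ (fderiv ℝ φ) X :=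
    (hφ.fderiv_right (m := 1) le_rfl).differentiableAt one_ne_zero
  exact differentiableAt_pi.1 (hfderiv.clm_apply (differentiableAt_const _)) i

/-- The left Cauchy–Green tensor of the deformation `φ` with respect to the material metric `G`,
as a function of the material point `X`; the spatial field `b` of the theorem is its push-forward,
`b ∘ φ = leftCauchyGreen φ G`. -/
noncomputable def leftCauchyGreen (φ : (Fin 3 → ℝ) → (Fin 3 → ℝ))
    (G : (Fin 3 → ℝ) → Matrix (Fin 3) (Fin 3) ℝ) (X : Fin 3 → ℝ) : Matrix (Fin 3) (Fin 3) ℝ :=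
  jac φ X * (G X)⁻¹ * (jac φ X)ᵀ

variable {G b : (Fin 3 → ℝ) → Matrix (Fin 3) (Fin 3) ℝ}

theorem differentiableAt_leftCauchyGreen_apply (hφ : ContDiffAt ℝ 2 φ X)
    (hG : ∀ i j, DifferentiableAt ℝ (fun Y => G Y i j) X) (hGdet : (G X).det ≠ 0) (i j : Fin 3) :
    DifferentiableAt ℝ (fun Y => leftCauchyGreen φ G Y i j) X := by
  have hjac := differentiableAt_jac_apply hφ
  have hGinv := differentiableAt_matrix_inv_apply hG hGdet
  exact differentiableAt_matrix_mul_apply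
    (fun k => differentiableAt_matrix_mul_apply (hjac i) fun l => hGinv l k) fun k => hjac j k

theorem differentiableAt_of_comp_eq_leftCauchyGreen (hφ : ContDiffAt ℝ 2 φ X)
    (hφdet : (jac φ X).det ≠ 0) (hG : ∀ i j, DifferentiableAt ℝ (fun Y => G Y i j) X)
    (hGdet : (G X).det ≠ 0) (hb : b ∘ φ =ᶠ[nhds X] leftCauchyGreen φ G) (i j : Fin 3) :
    DifferentiableAt ℝ (fun y => b y i j) (φ X) := by
  rw [det_jac] at hφdet
  have hφ' : HasStrictFDerivAt φ
      ((fderiv ℝ φ X).toContinuousLinearEquivOfDetNeZero hφdet : _ →L[ℝ] _) X := by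
    simpa using hφ.hasStrictFDerivAt two_ne_zero
  have hbφ : (fun y => b y i j) ∘ φ =ᶠ[nhds X] fun Y => leftCauchyGreen φ G Y i j :=
    hb.fun_comp fun M => M i j
  exact differentiableAt_of_comp_of_hasStrictFDerivAt_equiv hφ'
    ((differentiableAt_leftCauchyGreen_apply hφ hG hGdet i j).congr_of_eventuallyEq hbφ)

end Kinematics

section Divergence

variable {f : (Fin 3 → ℝ) → ℝ}

theorem mdiv_smul_one_apply (x : Fin 3 → ℝ) (i : Fin 3) :
    mdiv (fun y => f y • (1 : Matrix (Fin 3) (Fin 3) ℝ)) x i =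
      fderiv ℝ f x (Pi.single i 1) := by
  rw [mdiv, Finset.sum_eq_single i]
  · simp
  · intro j _ hj
    simp [Matrix.one_apply_ne hj.symm]
  · simp

theorem mdiv_smul_one_eq_zero_iff {x : Fin 3 → ℝ} :
    mdiv (fun y => f y • (1 : Matrix (Fin 3) (Fin 3) ℝ)) x = 0 ↔ fderiv ℝ f x = 0 := by
  simp only [funext_iff, mdiv_smul_one_apply, Pi.zero_apply]
  refine ⟨fun h => ContinuousLinearMap.coe_injective (LinearMap.pi_ext' fun i => ?_), fun h => ?_⟩
  · exact LinearMap.ext_ring (by simpa using h i)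
  · simp [h]

theorem eq_of_mdiv_smul_one_eq_zero {U : Set (Fin 3 → ℝ)} (hUopen : IsOpen U)
    (hUconn : IsPreconnected U) (hf : DifferentiableOn ℝ f U)
    (hdiv : ∀ x ∈ U, mdiv (fun y => f y • (1 : Matrix (Fin 3) (Fin 3) ℝ)) x = 0)
    {x y : Fin 3 → ℝ} (hx : x ∈ U) (hy : y ∈ U) : f x = f y :=
  hUopen.is_const_of_fderiv_eq_zero hUconn hf
    (fun z hz => mdiv_smul_one_eq_zero_iff.1 (hdiv z hz)) hx hy

end Divergence

theorem anelastic_universality_conditions_general {U : Set (Fin 3 → ℝ)} (hUopen : IsOpen U)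
    (hUconn : IsPreconnected U) {b c : (Fin 3 → ℝ) → Matrix (Fin 3) (Fin 3) ℝ}
    (hb : ∀ x ∈ U, ∀ i j, DifferentiableAt ℝ (fun y => b y i j) x)
    (huniv : ∀ α β γ : (Fin 3 → ℝ) →ᴬ[ℝ] ℝ, ∀ x ∈ U, mdiv (fun y =>
      α (principalInvariants (b y)) • (1 : Matrix (Fin 3) (Fin 3) ℝ)
        + β (principalInvariants (b y)) • b y
        + γ (principalInvariants (b y)) • c y) x = 0) :
    (∀ x ∈ U, ∀ y ∈ U, principalInvariants (b x) = principalInvariants (b y))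
      ∧ (∀ x ∈ U, mdiv b x = 0 ∧ mdiv c x = 0) := by
  let one : (Fin 3 → ℝ) →ᴬ[ℝ] ℝ := .const ℝ _ 1
  let coord (k : Fin 3) : (Fin 3 → ℝ) →ᴬ[ℝ] ℝ :=
    (ContinuousLinearMap.proj k).toContinuousAffineMap
  refine ⟨fun x hx y hy => funext fun k => ?_, fun x hx => ⟨?_, ?_⟩⟩
  · have hdiff : DifferentiableOn ℝ (fun z => principalInvariants (b z) k) U := fun z hz =>
      (differentiableAt_pi.1 (differentiableAt_principalInvariants (hb z hz)) k)
        |>.differentiableWithinAt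
    refine eq_of_mdiv_smul_one_eq_zero hUopen hUconn hdiff (fun z hz => ?_) hx hy
    simpa [coord] using huniv (coord k) 0 0 z hz
  · simpa [one] using huniv 0 one 0 x hx
  · simpa [one] using huniv 0 0 one x hx

/-- universality conditions in compressible isotropic Cauchy
anelasticity. If for every choice of smooth response functions `α, β, γ` the Cauchy
stress `σ = α·Id + β·b + γ·c` is divergence-free on `U = φ(Ω)`, where
`b(φ(X)) = Dφ(X) G(X)⁻¹ Dφ(X)ᵀ` and `c = b⁻¹`, then the principal invariants of `b` are
constant on `U`, and `div b = div c = 0` on `U`. -/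
theorem anelastic_universality_conditions
    (Ω U : Set (Fin 3 → ℝ)) (hΩopen : IsOpen Ω) (hΩconn : IsConnected Ω)
    (φ : (Fin 3 → ℝ) → (Fin 3 → ℝ)) (hφ : ContDiffOn ℝ (⊤ : ℕ∞) φ Ω)
    (hφinj : Set.InjOn φ Ω)
    (hφdet : ∀ X ∈ Ω, (jac φ X).det ≠ 0)
    (hU : U = φ '' Ω) (hUopen : IsOpen U)
    (G : (Fin 3 → ℝ) → Matrix (Fin 3) (Fin 3) ℝ)
    (hGsmooth : ∀ i j, ContDiffOn ℝ (⊤ : ℕ∞) (fun X => G X i j) Ω)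
    (hGsym : ∀ X ∈ Ω, (G X)ᵀ = G X)
    (hGpd : ∀ X ∈ Ω, (G X).PosDef)
    (b : (Fin 3 → ℝ) → Matrix (Fin 3) (Fin 3) ℝ)
    (hb : ∀ X ∈ Ω, b (φ X) = jac φ X * (G X)⁻¹ * (jac φ X)ᵀ)
    (huniv : ∀ α β γ : (Fin 3 → ℝ) → ℝ,
      ContDiff ℝ (⊤ : ℕ∞) α → ContDiff ℝ (⊤ : ℕ∞) β → ContDiff ℝ (⊤ : ℕ∞) γ →
      ∀ x ∈ U, mdiv (fun y =>
        α (principalInvariants (b y)) • (1 : Matrix (Fin 3) (Fin 3) ℝ)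
          + β (principalInvariants (b y)) • b y
          + γ (principalInvariants (b y)) • (b y)⁻¹) x = 0) :
    (∀ x ∈ U, ∀ y ∈ U, principalInvariants (b x) = principalInvariants (b y))
      ∧ (∀ x ∈ U, mdiv b x = 0 ∧ mdiv (fun y => (b y)⁻¹) x = 0) := by
  subst hU
  have hbdiff : ∀ x ∈ φ '' Ω, ∀ i j, DifferentiableAt ℝ (fun y => b y i j) x := by
    rintro _ ⟨X, hX, rfl⟩
    have hΩX : Ω ∈ nhds X := hΩopen.mem_nhds hX
    exact differentiableAt_of_comp_eq_leftCauchyGreen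
      (contDiffAt_infty.1 (hφ.contDiffAt hΩX) 2) (hφdet X hX)
      (fun i j => ((hGsmooth i j).contDiffAt hΩX).differentiableAt (by simp))
      (hGpd X hX).det_pos.ne' (Filter.mem_of_superset hΩX hb)
  exact anelastic_universality_conditions_general hUopen
    (hΩconn.isPreconnected.image φ hφ.continuousOn) hbdiff
    fun α β γ => huniv α β γ α.contDiff β.contDiff γ.contDiff
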